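/- arXiv:1502.03602 — 4 statements merged into one kernel-verified Lean document; each statement's English description precedes it below -/
import Mathlib

section
/- Let P ∈ ℝ^{n×n} be symmetric positive definite with smallest and largest eigenvalues λ_min(P), λ_max(P), let Γ ∈ ℝ^{n×n} be such that PΓ is symmetric positive semidefinite with smallest eigenvalue λ_min(PΓ), let α ≥ 0, and let f : ℝⁿ → ℝⁿ be Lipschitz with constant L_f, i.e., ‖f(u) − f(v)‖ ≤ L_f‖u − v‖ for all u, v ∈ ℝⁿ (Euclidean norm). Then f ∈ Quad(P, αΓ, β) with β = α·λ_min(PΓ)/λ_max(P) − L_f·λ_max(P)/λ_min(P); that is, for all u, v ∈ ℝⁿ, (u − v)ᵀ P [f(u) − f(v) − αΓ(u − v)] ≤ −β·(u − v)ᵀ P (u − v). -/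
open Matrix

/-- The Euclidean norm on `ℝⁿ`. -/
noncomputable def euclNorm {n : ℕ} (x : Fin n → ℝ) : ℝ := Real.sqrt (∑ i, x i ^ 2)

/-- `f ∈ Quad(P, αΓ, β)`:
`(u − v)ᵀ P [f(u) − f(v) − αΓ(u − v)] ≤ −β·(u − v)ᵀ P (u − v)` for all `u, v`. -/
def MemQuad {n : ℕ} (P Γ : Matrix (Fin n) (Fin n) ℝ) (α β : ℝ)
    (f : (Fin n → ℝ) → (Fin n → ℝ)) : Prop :=
  ∀ u v : Fin n → ℝ,
    (u - v) ⬝ᵥ P *ᵥ (f u - f v - α • Γ *ᵥ (u - v)) ≤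
      -β * ((u - v) ⬝ᵥ P *ᵥ (u - v))

/-!
Write `q(x) = ⟪x, P x⟫`, so that `m‖x‖² ≤ q(x) ≤ M‖x‖²` for the extreme eigenvalues `m`, `M` of `P`,
and put `x = u - v`, `y = f u - f v`. The Cauchy–Schwarz inequality for the form `⟪·, P ·⟫` gives
`⟪x, P y⟫ ≤ M‖x‖‖y‖ ≤ L M‖x‖² ≤ (L M / m) q(x)`, while
`⟪x, P Γ x⟫ ≥ k‖x‖² ≥ (k / M) q(x)` for the smallest eigenvalue `k ≥ 0` of `P Γ`.
-/

open WithLp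
open scoped RealInnerProductSpace

section InnerProductSpace

variable {E : Type*} [NormedAddCommGroup E] [InnerProductSpace ℝ E] {P : E →ₗ[ℝ] E} {m M L : ℝ}

lemma inner_map_sq_le_mul_inner_map_self (hP : P.IsPositive) (x y : E) :
    ⟪x, P y⟫ ^ 2 ≤ ⟪x, P x⟫ * ⟪y, P y⟫ :=
  LinearMap.BilinForm.apply_sq_le_of_symm ((innerₗ E).compl₂ P) hP.inner_nonneg_right
    ⟨fun x y ↦ by simpa [real_inner_comm] using (hP.isSymmetric x y).symm⟩ x y

lemma inner_map_le_mul_norm_mul_norm (hP : P.IsPositive) (hM : 0 ≤ M)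
    (hPM : ∀ x, ⟪x, P x⟫ ≤ M * ‖x‖ ^ 2) (x y : E) : ⟪x, P y⟫ ≤ M * (‖x‖ * ‖y‖) := by
  refine le_of_sq_le_sq ?_ (by positivity)
  calc ⟪x, P y⟫ ^ 2 ≤ ⟪x, P x⟫ * ⟪y, P y⟫ := inner_map_sq_le_mul_inner_map_self hP x y
    _ ≤ (M * ‖x‖ ^ 2) * (M * ‖y‖ ^ 2) := by
      gcongr
      exacts [hP.inner_nonneg_right y, hPM x, hPM y]
    _ = (M * (‖x‖ * ‖y‖)) ^ 2 := by ring

lemma inner_map_le_mul_inner_map_self (hP : P.IsPositive) (hm : 0 < m) (hM : 0 ≤ M) (hL : 0 ≤ L)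
    (hPM : ∀ x, ⟪x, P x⟫ ≤ M * ‖x‖ ^ 2) {x y : E} (hmx : m * ‖x‖ ^ 2 ≤ ⟪x, P x⟫)
    (hxy : ‖y‖ ≤ L * ‖x‖) : ⟪x, P y⟫ ≤ L * M / m * ⟪x, P x⟫ :=
  calc ⟪x, P y⟫ ≤ M * (‖x‖ * ‖y‖) := inner_map_le_mul_norm_mul_norm hP hM hPM x y
    _ ≤ M * (‖x‖ * (L * ‖x‖)) := by gcongr
    _ = L * M / m * (m * ‖x‖ ^ 2) := by field_simp
    _ ≤ L * M / m * ⟪x, P x⟫ := by gcongr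

theorem lipschitz_mem_quad_general (hP : P.IsPositive) (hm : 0 < m)
    (hPm : ∀ x, m * ‖x‖ ^ 2 ≤ ⟪x, P x⟫) (hPM : ∀ x, ⟪x, P x⟫ ≤ M * ‖x‖ ^ 2)
    {Γ : E → E} {k : ℝ} (hk : 0 ≤ k) (hPΓ : ∀ x, k * ‖x‖ ^ 2 ≤ ⟪x, P (Γ x)⟫)
    {α : ℝ} (hα : 0 ≤ α) {f : E → E} (hf : ∀ u v, ‖f u - f v‖ ≤ L * ‖u - v‖) (u v : E) :
    ⟪u - v, P (f u - f v - α • Γ (u - v))⟫ ≤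
      -(α * k / M - L * M / m) * ⟪u - v, P (u - v)⟫ := by
  have hfuv := hf u v
  generalize f u - f v = y at hfuv ⊢
  generalize u - v = x at hfuv ⊢
  rcases eq_or_ne x 0 with rfl | hx
  · simp
  have hx' : 0 < ‖x‖ := norm_pos_iff.2 hx
  have hM : 0 < M := hm.trans_le <| le_of_mul_le_mul_right ((hPm x).trans (hPM x)) (pow_pos hx' 2)
  have hL : 0 ≤ L := nonneg_of_mul_nonneg_left ((norm_nonneg y).trans hfuv) hx'
  have lipschitz_term : ⟪x, P y⟫ ≤ L * M / m * ⟪x, P x⟫ :=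
    inner_map_le_mul_inner_map_self hP hm hM.le hL hPM (hPm x) hfuv
  have coupling_term : α * k / M * ⟪x, P x⟫ ≤ α * ⟪x, P (Γ x)⟫ :=
    calc α * k / M * ⟪x, P x⟫ ≤ α * k / M * (M * ‖x‖ ^ 2) := by gcongr; exact hPM x
      _ = α * (k * ‖x‖ ^ 2) := by field_simp
      _ ≤ α * ⟪x, P (Γ x)⟫ := by gcongr; exact hPΓ x
  rw [map_sub, map_smul, inner_sub_right, real_inner_smul_right]
  linarith

end InnerProductSpace

section Eigenvalues

open scoped ComplexOrder MatrixOrder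

variable {𝕜 ι : Type*} [RCLike 𝕜] [Fintype ι] [DecidableEq ι] {A : Matrix ι ι 𝕜}

lemma algebraMap_iInf_eigenvalues_le (hA : A.IsHermitian) :
    algebraMap ℝ (Matrix ι ι 𝕜) (⨅ i, hA.eigenvalues i) ≤ A := by
  rw [algebraMap_le_iff_le_spectrum (ha := hA.isSelfAdjoint), hA.spectrum_real_eq_range_eigenvalues]
  rintro _ ⟨i, rfl⟩
  exact ciInf_le (Set.finite_range _).bddBelow i

lemma le_algebraMap_iSup_eigenvalues (hA : A.IsHermitian) :
    A ≤ algebraMap ℝ (Matrix ι ι 𝕜) (⨆ i, hA.eigenvalues i) := by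
  rw [le_algebraMap_iff_spectrum_le (ha := hA.isSelfAdjoint), hA.spectrum_real_eq_range_eigenvalues]
  rintro _ ⟨i, rfl⟩
  exact le_ciSup (Set.finite_range _).bddAbove i

lemma re_inner_toEuclideanLin_mono {B : Matrix ι ι 𝕜} (hAB : A ≤ B) (x : EuclideanSpace 𝕜 ι) :
    RCLike.re (inner 𝕜 x (A.toEuclideanLin x)) ≤ RCLike.re (inner 𝕜 x (B.toEuclideanLin x)) := by
  have h := (Matrix.isPositive_toEuclideanLin_iff.2 (Matrix.le_iff.1 hAB)).re_inner_nonneg_right x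
  simpa [inner_sub_right] using h

lemma re_inner_toEuclideanLin_algebraMap (c : ℝ) (x : EuclideanSpace 𝕜 ι) :
    RCLike.re (inner 𝕜 x ((algebraMap ℝ (Matrix ι ι 𝕜) c).toEuclideanLin x)) = c * ‖x‖ ^ 2 := by
  have h : (algebraMap ℝ (Matrix ι ι 𝕜) c).toEuclideanLin x = (c : 𝕜) • x := by
    ext i
    simp [Matrix.algebraMap_eq_diagonal, Matrix.mulVec_diagonal, Algebra.smul_def]
  rw [h, inner_smul_right, RCLike.re_ofReal_mul, inner_self_eq_norm_sq]

lemma iInf_eigenvalues_mul_norm_sq_le_re_inner (hA : A.IsHermitian) (x : EuclideanSpace 𝕜 ι) :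
    (⨅ i, hA.eigenvalues i) * ‖x‖ ^ 2 ≤ RCLike.re (inner 𝕜 x (A.toEuclideanLin x)) := by
  rw [← re_inner_toEuclideanLin_algebraMap]
  exact re_inner_toEuclideanLin_mono (algebraMap_iInf_eigenvalues_le hA) x

lemma re_inner_le_iSup_eigenvalues_mul_norm_sq (hA : A.IsHermitian) (x : EuclideanSpace 𝕜 ι) :
    RCLike.re (inner 𝕜 x (A.toEuclideanLin x)) ≤ (⨆ i, hA.eigenvalues i) * ‖x‖ ^ 2 := by
  rw [← re_inner_toEuclideanLin_algebraMap]
  exact re_inner_toEuclideanLin_mono (le_algebraMap_iSup_eigenvalues hA) x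

lemma iInf_eigenvalues_pos [Nonempty ι] (hA : A.PosDef) :
    0 < ⨅ i, hA.isHermitian.eigenvalues i := by
  obtain ⟨i, hi⟩ := exists_eq_ciInf_of_finite (f := hA.isHermitian.eigenvalues)
  exact hi ▸ hA.eigenvalues_pos i

end Eigenvalues

section Coordinates

variable {n : ℕ}

lemma euclNorm_eq_norm_toLp (x : Fin n → ℝ) : euclNorm x = ‖toLp 2 x‖ := by
  simp [euclNorm, EuclideanSpace.norm_eq]

lemma dotProduct_mulVec_eq_inner {ι : Type*} [Fintype ι] [DecidableEq ι] (A : Matrix ι ι ℝ)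
    (x y : ι → ℝ) :
    x ⬝ᵥ A *ᵥ y = ⟪toLp 2 x, A.toEuclideanLin (toLp 2 y)⟫ := by
  simp [EuclideanSpace.inner_toLp_toLp, dotProduct_comm]

lemma memQuad_iff_inner {P Γ : Matrix (Fin n) (Fin n) ℝ} {α β : ℝ}
    {f : (Fin n → ℝ) → (Fin n → ℝ)} :
    MemQuad P Γ α β f ↔ ∀ u v : EuclideanSpace ℝ (Fin n),
      ⟪u - v, P.toEuclideanLin (toLp 2 (f u) - toLp 2 (f v) - α • Γ.toEuclideanLin (u - v))⟫ ≤
        -β * ⟪u - v, P.toEuclideanLin (u - v)⟫ := by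
  simp only [MemQuad, dotProduct_mulVec_eq_inner]
  exact ⟨fun h u v ↦ h u v, fun h u v ↦ h (toLp 2 u) (toLp 2 v)⟩

end Coordinates

/-- If `P` is symmetric positive definite, `PΓ` is symmetric positive semidefinite,
`α ≥ 0`, and `f` is Lipschitz with constant `L_f` (Euclidean norm), then
`f ∈ Quad(P, αΓ, β)` with `β = α·λ_min(PΓ)/λ_max(P) − L_f·λ_max(P)/λ_min(P)`. -/
theorem lipschitz_mem_quad
    {n : ℕ} [NeZero n]
    (P Γ : Matrix (Fin n) (Fin n) ℝ)
    (hP : P.PosDef) (hPΓ : (P * Γ).PosSemidef)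
    (α : ℝ) (hα : 0 ≤ α)
    (f : (Fin n → ℝ) → (Fin n → ℝ)) (Lf : ℝ)
    (hLip : ∀ u v : Fin n → ℝ, euclNorm (f u - f v) ≤ Lf * euclNorm (u - v)) :
    MemQuad P Γ α
      (α * (⨅ i, hPΓ.isHermitian.eigenvalues i) / (⨆ i, hP.isHermitian.eigenvalues i)
        - Lf * (⨆ i, hP.isHermitian.eigenvalues i) / (⨅ i, hP.isHermitian.eigenvalues i))
      f :=
  memQuad_iff_inner.2 <| lipschitz_mem_quad_general
    (Matrix.isPositive_toEuclideanLin_iff.2 hP.posSemidef) (iInf_eigenvalues_pos hP)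
    (iInf_eigenvalues_mul_norm_sq_le_re_inner hP.isHermitian)
    (re_inner_le_iSup_eigenvalues_mul_norm_sq hP.isHermitian)
    (Real.iInf_nonneg hPΓ.eigenvalues_nonneg)
    (fun x ↦ by simpa using iInf_eigenvalues_mul_norm_sq_le_re_inner hPΓ.isHermitian x) hα
    fun u v ↦ by simpa [euclNorm_eq_norm_toLp] using hLip u v
end

section
/- Let P ∈ ℝ^{n×n} be symmetric positive definite, let f : ℝⁿ → ℝⁿ be continuously differentiable, and suppose there exists σ ∈ ℝ such that for every x ∈ ℝⁿ the symmetric part of P·Df(x) satisfies {P·Df(x)}ˢ ⪰ σ·P (i.e., {P·Df(x)}ˢ − σP is positive semidefinite), where Df(x) is the Jacobian matrix of f at x. Then for all u, v ∈ ℝⁿ, (u − v)ᵀ P (f(u) − f(v)) ≥ σ·(u − v)ᵀ P (u − v). -/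
open Matrix

/-!
Pairing `f` with the functional `(u - v)ᵀ P` makes it scalar-valued, so the mean value theorem
applies as an equality: some `z` on the segment from `v` to `u` satisfies
`(u - v)ᵀ P (f u - f v) = (u - v)ᵀ P Df(z) (u - v)`. A quadratic form only sees the symmetric part
of its matrix, so the right-hand side is at least `σ (u - v)ᵀ P (u - v)`.
-/

section MeanValue

variable {E F : Type*} [NormedAddCommGroup E] [NormedSpace ℝ E]
  [NormedAddCommGroup F] [NormedSpace ℝ F]

theorem exists_mem_segment_dual_apply_sub_eq {f : E → F} {f' : E → E →L[ℝ] F} {s : Set E}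
    {x y : E} (hf : ∀ z ∈ s, HasFDerivWithinAt f (f' z) s z) (hs : Convex ℝ s)
    (hx : x ∈ s) (hy : y ∈ s) (φ : StrongDual ℝ F) :
    ∃ z ∈ segment ℝ x y, φ (f y - f x) = φ (f' z (y - x)) := by
  simpa only [Function.comp_apply, ContinuousLinearMap.comp_apply, map_sub] using
    domain_mvt (fun z hz ↦ φ.hasFDerivAt.comp_hasFDerivWithinAt z (hf z hz)) hs hx hy

end MeanValue

section SymmPart

variable {ι R : Type*}

/-- The symmetric part `{A}ˢ = (A + Aᵀ) / 2` of a square matrix. Unlike Mathlib's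
`selfAdjointPart`, it is built from the transpose, with no conjugation of the entries. -/
def symmPart [DivisionRing R] (A : Matrix ι ι R) : Matrix ι ι R :=
  (1 / 2 : R) • (A + Aᵀ)

variable [Fintype ι] [Field R] [NeZero (2 : R)]

theorem dotProduct_symmPart_mulVec_self (A : Matrix ι ι R) (w : ι → R) :
    w ⬝ᵥ symmPart A *ᵥ w = w ⬝ᵥ A *ᵥ w := by
  rw [symmPart, smul_mulVec, add_mulVec, dotProduct_smul, dotProduct_add,
    dotProduct_transpose_mulVec, ← two_mul, smul_eq_mul, one_div,
    inv_mul_cancel_left₀ two_ne_zero]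

theorem dotProduct_mulVec_self_le_of_posSemidef_symmPart_sub [PartialOrder R]
    [IsOrderedAddMonoid R] [StarRing R] [TrivialStar R] {A B : Matrix ι ι R}
    (h : (symmPart A - B).PosSemidef) (w : ι → R) :
    w ⬝ᵥ B *ᵥ w ≤ w ⬝ᵥ A *ᵥ w := by
  have hw : 0 ≤ w ⬝ᵥ (symmPart A - B) *ᵥ w := by
    simpa only [star_trivial] using h.dotProduct_mulVec_nonneg w
  rwa [sub_mulVec, dotProduct_sub, dotProduct_symmPart_mulVec_self, sub_nonneg] at hw

end SymmPart

theorem exists_mem_segment_dotProduct_sub_eq {ι κ : Type*} [Fintype ι] [Fintype κ]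
    {f : (ι → ℝ) → κ → ℝ} {Df : (ι → ℝ) → Matrix κ ι ℝ} {s : Set (ι → ℝ)} {x y : ι → ℝ}
    (hDf : ∀ z ∈ s, HasFDerivWithinAt f (Df z).mulVecLin.toContinuousLinearMap s z)
    (hs : Convex ℝ s) (hx : x ∈ s) (hy : y ∈ s) (w : κ → ℝ) :
    ∃ z ∈ segment ℝ x y, w ⬝ᵥ (f y - f x) = w ⬝ᵥ Df z *ᵥ (y - x) :=
  exists_mem_segment_dual_apply_sub_eq hDf hs hx hy
    (dotProductBilin ℝ ℝ w).toContinuousLinearMap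

theorem quad_lower_of_jacobian_bound_general {ι : Type*} [Fintype ι] {P : Matrix ι ι ℝ}
    {f : (ι → ℝ) → ι → ℝ} {Df : (ι → ℝ) → Matrix ι ι ℝ} {s : Set (ι → ℝ)} {σ : ℝ}
    (hs : Convex ℝ s)
    (hDf : ∀ x ∈ s, HasFDerivWithinAt f (Df x).mulVecLin.toContinuousLinearMap s x)
    (hσ : ∀ x ∈ s, (symmPart (P * Df x) - σ • P).PosSemidef)
    {u v : ι → ℝ} (hu : u ∈ s) (hv : v ∈ s) :
    σ * ((u - v) ⬝ᵥ P *ᵥ (u - v)) ≤ (u - v) ⬝ᵥ P *ᵥ (f u - f v) := by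
  obtain ⟨z, hz, hmean⟩ := exists_mem_segment_dotProduct_sub_eq hDf hs hv hu ((u - v) ᵥ* P)
  have hzs : z ∈ s := hs.segment_subset hv hu hz
  calc
    σ * ((u - v) ⬝ᵥ P *ᵥ (u - v)) = (u - v) ⬝ᵥ (σ • P) *ᵥ (u - v) := by
      rw [smul_mulVec, dotProduct_smul, smul_eq_mul]
    _ ≤ (u - v) ⬝ᵥ (P * Df z) *ᵥ (u - v) :=
      dotProduct_mulVec_self_le_of_posSemidef_symmPart_sub (hσ z hzs) (u - v)
    _ = (u - v) ⬝ᵥ P *ᵥ (f u - f v) := by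
      rw [← mulVec_mulVec, dotProduct_mulVec, ← hmean, ← dotProduct_mulVec]

/-- If `P` is symmetric positive definite, `f : ℝⁿ → ℝⁿ` is continuously differentiable
with Jacobian `Df`, and the symmetric part of `P·Df(x)` satisfies
`{P·Df(x)}ˢ ⪰ σ·P` for all `x`, then
`(u − v)ᵀ P (f(u) − f(v)) ≥ σ·(u − v)ᵀ P (u − v)` for all `u, v`. -/
theorem quad_lower_of_jacobian_bound
    {n : ℕ}
    (P : Matrix (Fin n) (Fin n) ℝ) (hP : P.PosDef)
    (f : (Fin n → ℝ) → (Fin n → ℝ))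
    (Df : (Fin n → ℝ) → Matrix (Fin n) (Fin n) ℝ)
    (hDf : ∀ x : Fin n → ℝ,
      HasFDerivAt f (Df x).mulVecLin.toContinuousLinearMap x)
    (hDf_cont : Continuous Df)
    (σ : ℝ)
    (hσ : ∀ x : Fin n → ℝ,
      ((1 / 2 : ℝ) • (P * Df x + (P * Df x)ᵀ) - σ • P).PosSemidef) :
    ∀ u v : Fin n → ℝ,
      σ * ((u - v) ⬝ᵥ P *ᵥ (u - v)) ≤ (u - v) ⬝ᵥ P *ᵥ (f u - f v) := fun u v ↦
  quad_lower_of_jacobian_bound_general convex_univ (fun x _ ↦ (hDf x).hasFDerivWithinAt)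
    (fun x _ ↦ hσ x) (Set.mem_univ u) (Set.mem_univ v)
end

section
/- Let P ∈ ℝ^{n×n} be symmetric positive definite, let f : ℝⁿ → ℝⁿ be continuous and suppose there is σ ∈ ℝ with (u − v)ᵀ P (f(u) − f(v)) ≥ σ·(u − v)ᵀ P (u − v) for all u, v ∈ ℝⁿ. Let θ, ϑ ∈ ℝⁿ be constants and let u, v : [0,∞) → ℝⁿ be differentiable with u'(t) = f(u(t)) + θ and v'(t) = f(v(t)) + ϑ, u(0) = u₀, v(0) = v₀. Then for every μ > 0 with μ ≠ 2σ and every t ≥ 0, (u(t) − v(t))ᵀ P (u(t) − v(t)) ≥ exp((2σ − μ)t)·(u₀ − v₀)ᵀ P (u₀ − v₀) − ((θ − ϑ)ᵀ P (θ − ϑ)/μ)·(exp((2σ − μ)t) − 1)/(2σ − μ). -/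
open Matrix

/-!
Write `B x y = xᵀ P y`. Along two trajectories, the squared distance `V = B (u - v) (u - v)` has
derivative `2 * B (u - v) (f u - f v) + 2 * B (u - v) (θ - ϑ)`. The first term is at least
`2 * σ * V` by assumption and, by Young's inequality, the second is at least
`-μ * V - B (θ - ϑ) (θ - ϑ) / μ`. Hence `V' ≥ (2 * σ - μ) * V - B (θ - ϑ) (θ - ϑ) / μ`, and
Grönwall's inequality applied to `-V` bounds `V` from below.
-/

open Set

theorem gronwallBound_neg_neg (δ K ε x : ℝ) :
    gronwallBound (-δ) K (-ε) x = -gronwallBound δ K ε x := by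
  unfold gronwallBound
  split_ifs <;> ring

theorem gronwallBound_neg_right_of_K_ne_0 {δ K ε : ℝ} (hK : K ≠ 0) (x : ℝ) :
    gronwallBound δ K (-ε) x = Real.exp (K * x) * δ - ε * (Real.exp (K * x) - 1) / K := by
  rw [gronwallBound_of_K_ne_0 hK]
  ring

theorem gronwallBound_le_of_le_deriv_right {g g' : ℝ → ℝ} {δ K ε a b : ℝ}
    (hg : ContinuousOn g (Icc a b)) (hg' : ∀ x ∈ Ico a b, HasDerivWithinAt g (g' x) (Ici x) x)
    (ha : δ ≤ g a) (bound : ∀ x ∈ Ico a b, K * g x + ε ≤ g' x) :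
    ∀ x ∈ Icc a b, gronwallBound δ K ε (x - a) ≤ g x := by
  intro x hx
  have neg_le : -g x ≤ gronwallBound (-δ) K (-ε) (x - a) :=
    le_gronwallBound_of_liminf_deriv_right_le hg.neg
      (fun y hy _ hr ↦ (hg' y hy).neg.liminf_right_slope_le hr) (neg_le_neg ha)
      (fun y hy ↦ by
        simp only [Pi.neg_apply]
        linarith [bound y hy]) x hx
  rwa [gronwallBound_neg_neg, neg_le_neg_iff] at neg_le

theorem neg_mul_apply_self_sub_div_le_two_mul_apply {𝕜 M : Type*} [Field 𝕜] [LinearOrder 𝕜]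
    [IsStrictOrderedRing 𝕜] [AddCommGroup M] [Module 𝕜 M] {B : LinearMap.BilinForm 𝕜 M}
    (hB : B.IsPosSemidef) {μ : 𝕜} (hμ : 0 < μ) (x y : M) :
    -μ * B x x - B y y / μ ≤ 2 * B x y := by
  have symm : B y x = B x y := hB.isSymm.eq y x
  have expand : B (μ • x + y) (μ • x + y) / μ = μ * B x x + 2 * B x y + B y y / μ := by
    simp only [map_add, map_smul, LinearMap.add_apply, LinearMap.smul_apply, smul_eq_mul, symm]
    field
  have nonneg : 0 ≤ B (μ • x + y) (μ • x + y) / μ := div_nonneg (hB.nonneg _) hμ.le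
  linarith

theorem hasDerivWithinAt_bilin_apply_self {𝕜 E : Type*} [NontriviallyNormedField 𝕜]
    [NormedAddCommGroup E] [NormedSpace 𝕜 E] {B : E →L[𝕜] E →L[𝕜] 𝕜} (hB : B.toBilinForm.IsSymm)
    {w : 𝕜 → E} {w' : E} {s : Set 𝕜} {t : 𝕜} (hw : HasDerivWithinAt w w' s t) :
    HasDerivWithinAt (fun r ↦ B (w r) (w r)) (2 * B (w t) w') s t := by
  have symm : B w' (w t) = B (w t) w' := hB.eq w' (w t)
  simpa only [symm, ← two_mul] using B.hasDerivWithinAt_of_bilinear hw hw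

theorem isPosSemidef_toBilin' {ι R : Type*} [Fintype ι] [DecidableEq ι] [CommRing R]
    [PartialOrder R] [StarRing R] [TrivialStar R] {P : Matrix ι ι R} (hP : P.PosSemidef) :
    (toBilin' P).IsPosSemidef where
  isSymm := isSymm_toBilin'_iff_isSymm.2 <| by
    simpa only [IsSymm, IsHermitian, conjTranspose_eq_transpose_of_trivial] using hP.isHermitian
  nonneg x := by
    simpa only [toBilin'_apply', star_trivial] using hP.dotProduct_mulVec_nonneg x

theorem trajectory_P_distance_lower_bound_general {E : Type*} [NormedAddCommGroup E]
    [NormedSpace ℝ E] {B : E →L[ℝ] E →L[ℝ] ℝ} (hB : B.toBilinForm.IsPosSemidef)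
    {f : ℝ → E → E} {σ μ a b : ℝ} {θ ϑ : E} {u v : ℝ → E}
    (hσ : ∀ t ∈ Ico a b,
      σ * B (u t - v t) (u t - v t) ≤ B (u t - v t) (f t (u t) - f t (v t)))
    (hu : IsIntegralCurveOn u (fun t x ↦ f t x + θ) (Icc a b))
    (hv : IsIntegralCurveOn v (fun t x ↦ f t x + ϑ) (Icc a b))
    (hμ : 0 < μ) :
    ∀ t ∈ Icc a b,
      gronwallBound (B (u a - v a) (u a - v a)) (2 * σ - μ) (-(B (θ - ϑ) (θ - ϑ) / μ)) (t - a)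
        ≤ B (u t - v t) (u t - v t) := by
  have deriv_dist : ∀ t ∈ Icc a b, HasDerivWithinAt (fun s ↦ B (u s - v s) (u s - v s))
      (2 * B (u t - v t) ((f t (u t) + θ) - (f t (v t) + ϑ))) (Icc a b) t := fun t ht ↦
    hasDerivWithinAt_bilin_apply_self hB.isSymm ((hu t ht).sub (hv t ht))
  refine gronwallBound_le_of_le_deriv_right (HasDerivWithinAt.continuousOn deriv_dist)
    (fun t ht ↦ (deriv_dist t (Ico_subset_Icc_self ht)).mono_of_mem_nhdsWithin
      (Icc_mem_nhdsGE_of_mem ht)) le_rfl fun t ht ↦ ?_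
  have young : -μ * B (u t - v t) (u t - v t) - B (θ - ϑ) (θ - ϑ) / μ
      ≤ 2 * B (u t - v t) (θ - ϑ) :=
    neg_mul_apply_self_sub_div_le_two_mul_apply hB hμ _ _
  rw [add_sub_add_comm, map_add]
  linarith [hσ t ht]

/-- Lower-bound generator `ϱ` for the `P`-distance of two trajectories of
`u' = f(u) + θ`, `v' = f(v) + ϑ`, when
`(u − v)ᵀ P (f(u) − f(v)) ≥ σ·(u − v)ᵀ P (u − v)`. -/
theorem trajectory_P_distance_lower_bound
    {n : ℕ}
    (P : Matrix (Fin n) (Fin n) ℝ) (hP : P.PosDef)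
    (f : (Fin n → ℝ) → (Fin n → ℝ)) (hf : Continuous f)
    (σ : ℝ)
    (hσ : ∀ u v : Fin n → ℝ,
      σ * ((u - v) ⬝ᵥ P *ᵥ (u - v)) ≤ (u - v) ⬝ᵥ P *ᵥ (f u - f v))
    (θ ϑ : Fin n → ℝ)
    (u v : ℝ → Fin n → ℝ) (u₀ v₀ : Fin n → ℝ)
    (hu : ∀ t : ℝ, 0 ≤ t → HasDerivWithinAt u (f (u t) + θ) (Set.Ici 0) t)
    (hv : ∀ t : ℝ, 0 ≤ t → HasDerivWithinAt v (f (v t) + ϑ) (Set.Ici 0) t)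
    (hu0 : u 0 = u₀) (hv0 : v 0 = v₀) :
    ∀ μ : ℝ, 0 < μ → μ ≠ 2 * σ → ∀ t : ℝ, 0 ≤ t →
      Real.exp ((2 * σ - μ) * t) * ((u₀ - v₀) ⬝ᵥ P *ᵥ (u₀ - v₀))
        - ((θ - ϑ) ⬝ᵥ P *ᵥ (θ - ϑ) / μ) * (Real.exp ((2 * σ - μ) * t) - 1) / (2 * σ - μ)
      ≤ (u t - v t) ⬝ᵥ P *ᵥ (u t - v t) := by
  intro μ hμ hne t ht
  subst hu0 hv0
  rw [← gronwallBound_neg_right_of_K_ne_0 (sub_ne_zero.2 hne.symm)]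
  simp only [← toBilin'_apply'] at hσ ⊢
  simpa only [sub_zero] using!
    trajectory_P_distance_lower_bound_general (B := (toBilin' P).toContinuousBilinearMap)
      (f := fun _ ↦ f) (isPosSemidef_toBilin' hP.posSemidef) (fun s _ ↦ hσ (u s) (v s))
      (fun s hs ↦ (hu s hs.1).mono Icc_subset_Ici_self)
      (fun s hs ↦ (hv s hs.1).mono Icc_subset_Ici_self) hμ t (right_mem_Icc.2 ht)
end

section
/- Let L ∈ ℝ^{m×m} be the Laplacian matrix of a connected undirected graph on m nodes, with eigenvalues 0 = λ₁(L) < λ₂(L) ≤ … ≤ λ_m(L), let P ∈ ℝ^{n×n} be symmetric positive definite with largest eigenvalue λ_max(P), let Γ ∈ ℝ^{n×n} be such that PΓ is symmetric positive semidefinite, let α ∈ ℝ, β > 0 and c > 0 satisfy c·λ₂(L) > α, let f ∈ Quad(P, αΓ, β), and let 0 < β' < β. Suppose x¹,…,x^m : [0,∞) → ℝⁿ are differentiable and satisfy, for each i and all t ≥ 0, (xⁱ)'(t) = f(xⁱ(t)) − c·Σ_{j=1}^m L_{ij}·Γ·xʲ(t) + c·eᵢ(t), where eᵢ : [0,∞)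 → ℝⁿ. If there exist a > 0 and b > 0 with ‖eᵢ(t)‖ ≤ a·exp(−b·t) for every i and every t ≥ 0, then V satisfies the differential inequality V'(t) ≤ −2(β − β')·V(t) + (a²·c²·m·λ_m(L)·λ_max(P)/(2β'))·exp(−2b·t) for all t ≥ 0, and consequently for every γ with 0 < γ < 2·min(b, β − β') there is a constant C ≥ 0 such that V(t) ≤ C·exp(−γ·t) for all t ≥ 0. -/
open Matrix
open scoped Kronecker

/-- The Lyapunov function `V(t) = x(t)ᵀ (L ⊗ P) x(t)` of the stacked state. -/
noncomputable def lyapV {m n : ℕ} (L : Matrix (Fin m) (Fin m) ℝ)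
    (P : Matrix (Fin n) (Fin n) ℝ) (x : Fin m → ℝ → Fin n → ℝ) (t : ℝ) : ℝ :=
  (fun p : Fin m × Fin n => x p.1 t p.2) ⬝ᵥ (L ⊗ₖ P) *ᵥ
    (fun p : Fin m × Fin n => x p.1 t p.2)

/-!
For a Laplacian `L` and any bilinear form `B`, the pairing `∑ L i j * B i j` is half the sum of
`-L i j * (B i i - B i j - B j i + B j j)` over ordered pairs of nodes. Hence the Lyapunov function
only sees differences of states along edges, and the `Quad` condition, which concerns exactly such
differences, can be summed over the edges. The resulting term `α L ⊗ PΓ` is dominated by the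
coupling term `c L² ⊗ PΓ` because `c λ² - α λ ≥ 0` at every eigenvalue `λ` of `L`, while the error
is absorbed by Young's inequality and `L ⊗ P ≤ λ_m(L) λ_max(P) I`. The exponential bound on `V` then
follows by comparison with `C e^{-γt}`.
-/

section KroneckerProduct

open Function (uncurry)

variable {ι ι' κ κ' R : Type*} [Fintype ι] [Fintype κ]

lemma uncurry_dotProduct_uncurry [NonUnitalNonAssocSemiring R] (u v : ι → κ → R) :
    uncurry u ⬝ᵥ uncurry v = ∑ i, u i ⬝ᵥ v i :=
  Fintype.sum_prod_type _

lemma kronecker_mulVec_uncurry [CommSemiring R] (A : Matrix ι' ι R) (B : Matrix κ' κ R)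
    (u : ι → κ → R) :
    (A ⊗ₖ B) *ᵥ uncurry u = uncurry fun i => ∑ j, A i j • (B *ᵥ u j) := by
  ext ⟨i, k⟩
  simp only [Function.uncurry_apply_pair, mulVec, dotProduct, kroneckerMap_apply,
    Fintype.sum_prod_type, Finset.sum_apply, Pi.smul_apply, smul_eq_mul, Finset.mul_sum, mul_assoc]

lemma uncurry_dotProduct_kronecker_mulVec_uncurry [Fintype ι'] [Fintype κ'] [CommSemiring R]
    (A : Matrix ι' ι R) (B : Matrix κ' κ R) (u : ι' → κ' → R) (v : ι → κ → R) :
    uncurry u ⬝ᵥ (A ⊗ₖ B) *ᵥ uncurry v = ∑ i, ∑ j, A i j * (u i ⬝ᵥ B *ᵥ v j) := by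
  simp only [kronecker_mulVec_uncurry, uncurry_dotProduct_uncurry, dotProduct_sum,
    dotProduct_smul, smul_eq_mul]

end KroneckerProduct

section QuadraticForm

open scoped ComplexOrder MatrixOrder

variable {ι : Type*} [Fintype ι]

lemma dotProduct_mulVec_self_nonneg {M : Matrix ι ι ℝ} (hM : M.PosSemidef) (v : ι → ℝ) :
    0 ≤ v ⬝ᵥ M *ᵥ v := by
  simpa only [star_trivial] using hM.dotProduct_mulVec_nonneg v

lemma dotProduct_mulVec_self_mono {M N : Matrix ι ι ℝ} (hMN : M ≤ N) (v : ι → ℝ) :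
    v ⬝ᵥ M *ᵥ v ≤ v ⬝ᵥ N *ᵥ v := by
  simpa only [sub_mulVec, dotProduct_sub, sub_nonneg] using
    dotProduct_mulVec_self_nonneg (le_iff.1 hMN) v

lemma dotProduct_mulVec_comm_of_isSymm {R : Type*} [CommSemiring R] {M : Matrix ι ι R}
    (hM : M.IsSymm) (u v : ι → R) : u ⬝ᵥ M *ᵥ v = v ⬝ᵥ M *ᵥ u := by
  rw [dotProduct_mulVec, ← mulVec_transpose, hM.eq, dotProduct_comm]

lemma two_mul_dotProduct_mulVec_le {M : Matrix ι ι ℝ} (hM : M.PosSemidef) (u v : ι → ℝ) {r : ℝ}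
    (hr : 0 < r) :
    2 * (u ⬝ᵥ M *ᵥ v) ≤ r * (u ⬝ᵥ M *ᵥ u) + r⁻¹ * (v ⬝ᵥ M *ᵥ v) := by
  have hsquare := dotProduct_mulVec_self_nonneg hM (r • u - v)
  have hsymm : M.IsSymm := isHermitian_iff_isSymm.1 hM.isHermitian
  simp only [mulVec_sub, mulVec_smul, dotProduct_sub, sub_dotProduct, smul_dotProduct,
    dotProduct_smul, smul_eq_mul, dotProduct_mulVec_comm_of_isSymm hsymm v u] at hsquare
  have hscaled := mul_nonneg (inv_nonneg.2 hr.le) hsquare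
  field_simp at hscaled ⊢
  linarith

variable {𝕜 : Type*} [RCLike 𝕜] [DecidableEq ι]

lemma le_smul_one_of_eigenvalues_le {A : Matrix ι ι 𝕜} (hA : A.IsHermitian) {r : ℝ}
    (h : ∀ i, hA.eigenvalues i ≤ r) : A ≤ r • 1 := by
  rw [← Algebra.algebraMap_eq_smul_one]
  refine le_algebraMap_of_spectrum_le ?_ hA.isSelfAdjoint
  simpa only [hA.spectrum_real_eq_range_eigenvalues, Set.forall_mem_range] using h

lemma smul_le_smul_sq_of_eigenvalues {A : Matrix ι ι 𝕜} (hA : A.IsHermitian) {α c : ℝ}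
    (h : ∀ i, α * hA.eigenvalues i ≤ c * hA.eigenvalues i ^ 2) : α • A ≤ c • A ^ 2 := by
  have hAs : IsSelfAdjoint A := hA.isSelfAdjoint
  have hcfc : cfc (fun r : ℝ => α * r) A ≤ cfc (fun r : ℝ => c * r ^ 2) A := by
    refine cfc_mono ?_
    simpa only [hA.spectrum_real_eq_range_eigenvalues, Set.forall_mem_range] using h
  rwa [cfc_const_mul_id α A, cfc_const_mul c (fun r : ℝ => r ^ 2) A, cfc_pow_id A 2] at hcfc

lemma smul_le_smul_sq_of_spectral_gap {A : Matrix ι ι 𝕜} (hA : A.PosSemidef) {α c lam : ℝ}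
    (hc : 0 ≤ c) (hα : α ≤ c * lam)
    (hlam : ∀ i, hA.isHermitian.eigenvalues i ≠ 0 → lam ≤ hA.isHermitian.eigenvalues i) :
    α • A ≤ c • A ^ 2 := by
  refine smul_le_smul_sq_of_eigenvalues hA.isHermitian fun i => ?_
  set μ := hA.isHermitian.eigenvalues i
  obtain hzero | hne := eq_or_ne μ 0
  · simp only [hzero, mul_zero, ne_eq, OfNat.ofNat_ne_zero, not_false_eq_true, zero_pow, le_refl]
  · calc α * μ ≤ c * μ * μ :=
          mul_le_mul_of_nonneg_right (hα.trans (mul_le_mul_of_nonneg_left (hlam i hne) hc))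
            (hA.eigenvalues_nonneg i)
      _ = c * μ ^ 2 := by ring

end QuadraticForm

section KroneckerOrder

open scoped ComplexOrder MatrixOrder

variable {ι κ 𝕜 : Type*} [Finite ι] [Finite κ] [RCLike 𝕜]

lemma kronecker_le_kronecker_left {A : Matrix ι ι 𝕜} {B B' : Matrix κ κ 𝕜} (hA : 0 ≤ A)
    (hB : B ≤ B') : A ⊗ₖ B ≤ A ⊗ₖ B' := by
  have hdiff : 0 ≤ A ⊗ₖ (B' - B) := (hA.posSemidef.kronecker (le_iff.1 hB)).nonneg
  calc A ⊗ₖ B ≤ A ⊗ₖ (B' - B) + A ⊗ₖ B := le_add_of_nonneg_left hdiff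
    _ = A ⊗ₖ B' := by rw [← kronecker_add, sub_add_cancel]

lemma kronecker_le_kronecker_right {A A' : Matrix ι ι 𝕜} {B : Matrix κ κ 𝕜} (hA : A ≤ A')
    (hB : 0 ≤ B) : A ⊗ₖ B ≤ A' ⊗ₖ B := by
  have hdiff : 0 ≤ (A' - A) ⊗ₖ B := ((le_iff.1 hA).kronecker hB.posSemidef).nonneg
  calc A ⊗ₖ B ≤ (A' - A) ⊗ₖ B + A ⊗ₖ B := le_add_of_nonneg_left hdiff
    _ = A' ⊗ₖ B := by rw [← add_kronecker, sub_add_cancel]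

lemma kronecker_le_smul_one [DecidableEq ι] [DecidableEq κ] {A : Matrix ι ι 𝕜}
    {B : Matrix κ κ 𝕜} (hA : 0 ≤ A) {a b : ℝ} (hb : 0 ≤ b) (hAa : A ≤ a • 1) (hBb : B ≤ b • 1) :
    A ⊗ₖ B ≤ (a * b) • 1 :=
  calc A ⊗ₖ B ≤ A ⊗ₖ (b • 1) := kronecker_le_kronecker_left hA hBb
    _ ≤ (a • 1) ⊗ₖ (b • 1) :=
        kronecker_le_kronecker_right hAa (PosSemidef.one.smul hb).nonneg
    _ = (a * b) • 1 := by rw [smul_kronecker, kronecker_smul, one_kronecker_one, smul_smul]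

end KroneckerOrder

/-- Laplacian of an undirected graph whose edge `i j` carries the nonnegative weight `-L i j`. The
sign condition only concerns off-diagonal entries; vanishing row sums then determine the
diagonal. -/
structure IsWeightedLaplacian {ι R : Type*} [Fintype ι] [AddCommMonoid R] [LE R]
    (L : Matrix ι ι R) : Prop where
  isSymm : L.IsSymm
  nonpos_of_ne : ∀ i j, i ≠ j → L i j ≤ 0
  sum_row_eq_zero : ∀ i, ∑ j, L i j = 0

lemma isWeightedLaplacian_lapMatrix {ι R : Type*} [Fintype ι] [DecidableEq ι] [Ring R]
    [PartialOrder R] [IsOrderedRing R] (G : SimpleGraph ι) [DecidableRel G.Adj] :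
    IsWeightedLaplacian (G.lapMatrix R) where
  isSymm := G.isSymm_lapMatrix (R := R)
  nonpos_of_ne i j hij := by
    have hdiag : G.degMatrix R i j = 0 := diagonal_apply_ne _ hij
    rw [SimpleGraph.lapMatrix, Matrix.sub_apply, hdiag, zero_sub, neg_nonpos,
      SimpleGraph.adjMatrix_apply]
    split_ifs
    exacts [zero_le_one, le_rfl]
  sum_row_eq_zero i := by
    simpa only [mulVec, dotProduct, mul_one, Pi.zero_apply] using
      congrFun (G.lapMatrix_mulVec_const_eq_zero (R := R)) i

namespace IsWeightedLaplacian

variable {ι κ R : Type*} [Fintype ι] [Fintype κ] [CommRing R]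

lemma two_mul_sum_mul [LE R] {L : Matrix ι ι R} (hL : IsWeightedLaplacian L) (B : ι → ι → R) :
    2 * ∑ i, ∑ j, L i j * B i j = ∑ i, ∑ j, -L i j * (B i i - B i j - B j i + B j j) := by
  have hrow : ∑ i, ∑ j, L i j * B i i = 0 := by
    simp only [← Finset.sum_mul, hL.sum_row_eq_zero, zero_mul, Finset.sum_const_zero]
  have hcol : ∑ i, ∑ j, L i j * B j j = 0 := by
    rw [Finset.sum_comm]
    simpa only [hL.isSymm.apply] using hrow
  have hswap : ∑ i, ∑ j, L i j * B j i = ∑ i, ∑ j, L i j * B i j := by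
    rw [Finset.sum_comm]
    simp only [hL.isSymm.apply]
  simp only [neg_mul, mul_add, mul_sub, Finset.sum_add_distrib, Finset.sum_sub_distrib,
    Finset.sum_neg_distrib, hrow, hcol, hswap]
  ring

variable [LinearOrder R] [IsStrictOrderedRing R] {L : Matrix ι ι R}

lemma sum_mul_nonneg (hL : IsWeightedLaplacian L) {B : ι → ι → R}
    (hB : ∀ i j, 0 ≤ B i i - B i j - B j i + B j j) : 0 ≤ ∑ i, ∑ j, L i j * B i j := by
  refine nonneg_of_mul_nonneg_right ?_ (zero_lt_two' R)
  rw [hL.two_mul_sum_mul]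
  refine Finset.sum_nonneg fun i _ => Finset.sum_nonneg fun j _ => ?_
  obtain rfl | hij := eq_or_ne i j
  · simp only [sub_self, zero_sub, neg_add_cancel, mul_zero, le_refl]
  · exact mul_nonneg (neg_nonneg.2 (hL.nonpos_of_ne i j hij)) (hB i j)

lemma posSemidef [StarRing R] [TrivialStar R] (hL : IsWeightedLaplacian L) : L.PosSemidef := by
  refine .of_dotProduct_mulVec_nonneg (isHermitian_iff_isSymm.2 hL.isSymm) fun y => ?_
  have hform : star y ⬝ᵥ L *ᵥ y = ∑ i, ∑ j, L i j * (y i * y j) := by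
    simp only [star_trivial, dotProduct, mulVec, Finset.mul_sum, mul_left_comm]
  rw [hform]
  refine hL.sum_mul_nonneg fun i j => ?_
  calc 0 ≤ (y i - y j) ^ 2 := sq_nonneg _
    _ = y i * y i - y i * y j - y j * y i + y j * y j := by ring

end IsWeightedLaplacian

section Derivative

variable {𝕜 ι : Type*} [NontriviallyNormedField 𝕜] [Fintype ι] {s : Set 𝕜} {t : 𝕜}

lemma hasDerivWithinAt_dotProduct {u v : 𝕜 → ι → 𝕜} {u' v' : ι → 𝕜}
    (hu : HasDerivWithinAt u u' s t) (hv : HasDerivWithinAt v v' s t) :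
    HasDerivWithinAt (fun τ => u τ ⬝ᵥ v τ) (u' ⬝ᵥ v t + u t ⬝ᵥ v') s t := by
  simp only [dotProduct, ← Finset.sum_add_distrib]
  exact .fun_sum fun i _ => (hasDerivWithinAt_pi.1 hu i).fun_mul (hasDerivWithinAt_pi.1 hv i)

lemma hasDerivWithinAt_mulVec {κ : Type*} [Finite κ] (M : Matrix κ ι 𝕜) {u : 𝕜 → ι → 𝕜}
    {u' : ι → 𝕜} (hu : HasDerivWithinAt u u' s t) :
    HasDerivWithinAt (fun τ => M *ᵥ u τ) (M *ᵥ u') s t := by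
  have := Fintype.ofFinite κ
  exact hasDerivWithinAt_pi.2 fun i =>
    .fun_sum fun j _ => (hasDerivWithinAt_pi.1 hu j).const_mul (M i j)

lemma hasDerivWithinAt_dotProduct_mulVec_self {M : Matrix ι ι 𝕜} (hM : M.IsSymm)
    {u : 𝕜 → ι → 𝕜} {u' : ι → 𝕜} (hu : HasDerivWithinAt u u' s t) :
    HasDerivWithinAt (fun τ => u τ ⬝ᵥ M *ᵥ u τ) (2 * (u t ⬝ᵥ M *ᵥ u')) s t := by
  have hderiv := hasDerivWithinAt_dotProduct hu (hasDerivWithinAt_mulVec M hu)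
  rwa [dotProduct_mulVec_comm_of_isSymm hM, ← two_mul] at hderiv

end Derivative

section Decay

/-- On first contact with `C * exp (-γ * t)`, the function `V` has a smaller slope as soon as
`(κ - γ) * C > K`. -/
lemma exists_le_mul_exp_of_deriv_le {V V' : ℝ → ℝ} {κ μ γ K : ℝ} (hK : 0 ≤ K) (hγμ : γ ≤ μ)
    (hγκ : γ < κ) (hV : ∀ t, 0 ≤ t → HasDerivWithinAt V (V' t) (Set.Ici 0) t)
    (hle : ∀ t, 0 ≤ t → V' t ≤ -κ * V t + K * Real.exp (-μ * t)) :
    ∃ C : ℝ, 0 ≤ C ∧ ∀ t : ℝ, 0 ≤ t → V t ≤ C * Real.exp (-γ * t) := by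
  have hgap : 0 < κ - γ := sub_pos.2 hγκ
  obtain ⟨C, hC0, hCV, hCK⟩ : ∃ C, 0 ≤ C ∧ V 0 ≤ C ∧ K < (κ - γ) * C := by
    refine ⟨max (V 0) ((K + 1) / (κ - γ)), le_max_of_le_right (by positivity), le_max_left _ _, ?_⟩
    calc K < K + 1 := lt_add_one K
      _ = (κ - γ) * ((K + 1) / (κ - γ)) := (mul_div_cancel₀ _ hgap.ne').symm
      _ ≤ (κ - γ) * max (V 0) ((K + 1) / (κ - γ)) :=
          mul_le_mul_of_nonneg_left (le_max_right _ _) hgap.le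
  have hexp (s : ℝ) :
      HasDerivAt (fun s => C * Real.exp (-γ * s)) (C * (Real.exp (-γ * s) * -γ)) s := by
    simpa only [mul_one] using (((hasDerivAt_id' s).const_mul (-γ)).exp).const_mul C
  refine ⟨C, hC0, fun t ht => ?_⟩
  refine image_le_of_deriv_right_lt_deriv_boundary
    (fun s hs => (hV s hs.1).continuousWithinAt.mono Set.Icc_subset_Ici_self)
    (fun s hs => (hV s hs.1).mono (Set.Ici_subset_Ici.2 hs.1))
    (by simpa only [mul_zero, Real.exp_zero, mul_one] using hCV) hexp
    (fun s hs hcontact => ?_) (Set.right_mem_Icc.2 ht)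
  have hforcing : Real.exp (-μ * s) ≤ Real.exp (-γ * s) :=
    Real.exp_le_exp.2 (mul_le_mul_of_nonneg_right (neg_le_neg hγμ) hs.1)
  calc V' s ≤ -κ * V s + K * Real.exp (-μ * s) := hle s hs.1
    _ ≤ -κ * (C * Real.exp (-γ * s)) + K * Real.exp (-γ * s) := by rw [hcontact]; gcongr
    _ = (K - κ * C) * Real.exp (-γ * s) := by ring
    _ < (-γ * C) * Real.exp (-γ * s) :=
        mul_lt_mul_of_pos_right (by linarith) (Real.exp_pos _)
    _ = C * (Real.exp (-γ * s) * -γ) := by ring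

end Decay

section Network

open Function (uncurry)
open scoped MatrixOrder

variable {m n : ℕ}

lemma sq_euclNorm (x : Fin n → ℝ) : euclNorm x ^ 2 = x ⬝ᵥ x := by
  rw [euclNorm, Real.sq_sqrt (Finset.sum_nonneg fun i _ => sq_nonneg (x i))]
  simp only [dotProduct, pow_two]

lemma uncurry_dotProduct_self_le_of_euclNorm_le_exp {e : Fin m → Fin n → ℝ} {a b t : ℝ}
    (he : ∀ i, euclNorm (e i) ≤ a * Real.exp (-b * t)) :
    uncurry e ⬝ᵥ uncurry e ≤ m * (a ^ 2 * Real.exp (-2 * b * t)) :=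
  calc uncurry e ⬝ᵥ uncurry e = ∑ i, euclNorm (e i) ^ 2 := by
        simp only [uncurry_dotProduct_uncurry, sq_euclNorm]
    _ ≤ ∑ _i : Fin m, (a * Real.exp (-b * t)) ^ 2 :=
        Finset.sum_le_sum fun i _ => pow_le_pow_left₀ (Real.sqrt_nonneg _) (he i) 2
    _ = m * (a ^ 2 * Real.exp (-b * t) ^ 2) := by
        simp only [Finset.sum_const, Finset.card_univ, Fintype.card_fin, nsmul_eq_mul, mul_pow]
    _ = m * (a ^ 2 * Real.exp (-2 * b * t)) := by
        rw [← Real.exp_nat_mul]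
        ring_nf

lemma hasDerivWithinAt_lyapV {L : Matrix (Fin m) (Fin m) ℝ} {P : Matrix (Fin n) (Fin n) ℝ}
    (hL : L.IsSymm) (hP : P.IsSymm) {x : Fin m → ℝ → Fin n → ℝ} {x' : Fin m → Fin n → ℝ}
    {s : Set ℝ} {t : ℝ} (hx : ∀ i, HasDerivWithinAt (x i) (x' i) s t) :
    HasDerivWithinAt (lyapV L P x)
      (2 * (uncurry (fun i => x i t) ⬝ᵥ (L ⊗ₖ P) *ᵥ uncurry x')) s t := by
  have hLP : (L ⊗ₖ P).IsSymm := by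
    rw [IsSymm, ← kroneckerMap_transpose, hL.eq, hP.eq]
  have hstack : HasDerivWithinAt (fun τ => uncurry fun i => x i τ) (uncurry x') s t :=
    hasDerivWithinAt_pi.2 fun p => hasDerivWithinAt_pi.1 (hx p.1) p.2
  exact hasDerivWithinAt_dotProduct_mulVec_self hLP hstack

/-- Right-hand side of the coupled system: node `i` follows `f`, is diffusively coupled to the other
nodes through `L` and `Γ` with strength `c`, and is perturbed by the sampling error `e i`. -/
def coupledField (L : Matrix (Fin m) (Fin m) ℝ) (Γ : Matrix (Fin n) (Fin n) ℝ) (c : ℝ)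
    (f : (Fin n → ℝ) → Fin n → ℝ) (e u : Fin m → Fin n → ℝ) (i : Fin m) : Fin n → ℝ :=
  f (u i) - c • ∑ j, L i j • (Γ *ᵥ u j) + c • e i

lemma uncurry_coupledField (L : Matrix (Fin m) (Fin m) ℝ) (Γ : Matrix (Fin n) (Fin n) ℝ) (c : ℝ)
    (f : (Fin n → ℝ) → Fin n → ℝ) (e u : Fin m → Fin n → ℝ) :
    uncurry (coupledField L Γ c f e u) =
      uncurry (fun i => f (u i)) - c • (L ⊗ₖ Γ) *ᵥ uncurry u + c • uncurry e := by
  rw [kronecker_mulVec_uncurry]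
  rfl

variable {L : Matrix (Fin m) (Fin m) ℝ} {P Γ : Matrix (Fin n) (Fin n) ℝ} {α β c : ℝ}
  {f : (Fin n → ℝ) → Fin n → ℝ}

lemma IsWeightedLaplacian.dotProduct_kronecker_le_of_memQuad (hL : IsWeightedLaplacian L)
    (hf : MemQuad P Γ α β f) (u : Fin m → Fin n → ℝ) :
    uncurry u ⬝ᵥ (L ⊗ₖ P) *ᵥ uncurry (fun i => f (u i)) ≤
      α * (uncurry u ⬝ᵥ (L ⊗ₖ (P * Γ)) *ᵥ uncurry u) -
        β * (uncurry u ⬝ᵥ (L ⊗ₖ P) *ᵥ uncurry u) := by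
  let B (i j : Fin m) : ℝ :=
    α * (u i ⬝ᵥ (P * Γ) *ᵥ u j) - β * (u i ⬝ᵥ P *ᵥ u j) - u i ⬝ᵥ P *ᵥ f (u j)
  have hB (i j : Fin m) : 0 ≤ B i i - B i j - B j i + B j j := by
    have hquad := sub_nonneg.2 (hf (u i) (u j))
    simp only [mulVec_sub, mulVec_smul, mulVec_mulVec, dotProduct_sub, sub_dotProduct,
      dotProduct_smul, smul_eq_mul] at hquad
    linear_combination hquad
  have hsum := hL.sum_mul_nonneg hB
  simp only [B, mul_sub, mul_left_comm _ α, mul_left_comm _ β, Finset.sum_sub_distrib,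
    ← Finset.mul_sum, ← uncurry_dotProduct_kronecker_mulVec_uncurry] at hsum
  linarith

lemma kronecker_mul_le_of_smul_le_smul_sq (hPΓ : (P * Γ).PosSemidef) (hgap : α • L ≤ c • L ^ 2)
    (v : Fin m × Fin n → ℝ) :
    α * (v ⬝ᵥ (L ⊗ₖ (P * Γ)) *ᵥ v) ≤ c * (v ⬝ᵥ (L ⊗ₖ P) *ᵥ (L ⊗ₖ Γ) *ᵥ v) := by
  have hmono := dotProduct_mulVec_self_mono (kronecker_le_kronecker_right hgap hPΓ.nonneg) v
  rwa [smul_kronecker, smul_kronecker, pow_two, mul_kronecker_mul, smul_mulVec, smul_mulVec,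
    dotProduct_smul, dotProduct_smul, smul_eq_mul, smul_eq_mul, ← mulVec_mulVec] at hmono

/-- Young's inequality gives up the fraction `β'` of the decay rate `β` to absorb the error. -/
lemma IsWeightedLaplacian.two_mul_dotProduct_coupledField_le (hL : IsWeightedLaplacian L)
    (hP : P.PosSemidef) (hPΓ : (P * Γ).PosSemidef) (hf : MemQuad P Γ α β f)
    (hgap : α • L ≤ c • L ^ 2) {lamm lamP : ℝ} (hlamP : 0 ≤ lamP) (hLle : L ≤ lamm • 1)
    (hPle : P ≤ lamP • 1) {β' : ℝ} (hβ' : 0 < β') (e u : Fin m → Fin n → ℝ) :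
    2 * (uncurry u ⬝ᵥ (L ⊗ₖ P) *ᵥ uncurry (coupledField L Γ c f e u)) ≤
      -2 * (β - β') * (uncurry u ⬝ᵥ (L ⊗ₖ P) *ᵥ uncurry u) +
        c ^ 2 * (lamm * lamP) / (2 * β') * (uncurry e ⬝ᵥ uncurry e) := by
  have hquad := hL.dotProduct_kronecker_le_of_memQuad hf u
  have hcoupling := kronecker_mul_le_of_smul_le_smul_sq hPΓ hgap (uncurry u)
  have hyoung := two_mul_dotProduct_mulVec_le (hL.posSemidef.kronecker hP) (uncurry u)
    (c • uncurry e) (mul_pos two_pos hβ')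
  have hrayleigh := dotProduct_mulVec_self_mono
    (kronecker_le_smul_one hL.posSemidef.nonneg hlamP hLle hPle) (c • uncurry e)
  have herror := mul_le_mul_of_nonneg_left hrayleigh (inv_pos.2 (mul_pos two_pos hβ')).le
  simp only [uncurry_coupledField, mulVec_add, mulVec_sub, mulVec_smul, smul_mulVec, one_mulVec,
    dotProduct_add, dotProduct_sub, dotProduct_smul, smul_dotProduct, smul_eq_mul]
    at hyoung herror ⊢
  linear_combination 2 * hquad + 2 * hcoupling + hyoung + herror

end Network

theorem event_trigger_rule2_sync_general
    {m n : ℕ} {L : Matrix (Fin m) (Fin m) ℝ} (hL : IsWeightedLaplacian L)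
    {P Γ : Matrix (Fin n) (Fin n) ℝ} (hP : P.PosSemidef) (hPΓ : (P * Γ).PosSemidef)
    {lam2 lamm lamP : ℝ}
    (hlam2 : ∀ i, hL.posSemidef.isHermitian.eigenvalues i ≠ 0 →
      lam2 ≤ hL.posSemidef.isHermitian.eigenvalues i)
    (hlamm : IsGreatest (Set.range hL.posSemidef.isHermitian.eigenvalues) lamm)
    (hlamP : IsGreatest (Set.range hP.isHermitian.eigenvalues) lamP)
    {α β c : ℝ} (hc : 0 ≤ c) (hcα : α ≤ c * lam2)
    {f : (Fin n → ℝ) → (Fin n → ℝ)} (hf : MemQuad P Γ α β f)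
    {β' : ℝ} (hβ' : 0 < β') {x e : Fin m → ℝ → Fin n → ℝ}
    (hode : ∀ (i : Fin m) (t : ℝ), 0 ≤ t → HasDerivWithinAt (x i)
      (coupledField L Γ c f (fun j => e j t) (fun j => x j t) i) (Set.Ici 0) t)
    {a b : ℝ}
    (htrig : ∀ (i : Fin m) (t : ℝ), 0 ≤ t → euclNorm (e i t) ≤ a * Real.exp (-b * t)) :
    (∀ t : ℝ, 0 ≤ t → ∀ d : ℝ, HasDerivWithinAt (lyapV L P x) d (Set.Ici 0) t →
        d ≤ -2 * (β - β') * lyapV L P x t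
            + a ^ 2 * c ^ 2 * m * lamm * lamP / (2 * β') * Real.exp (-2 * b * t)) ∧
      ∀ γ : ℝ, γ < 2 * min b (β - β') →
        ∃ C : ℝ, 0 ≤ C ∧ ∀ t : ℝ, 0 ≤ t → lyapV L P x t ≤ C * Real.exp (-γ * t) := by
  have hlamm0 : 0 ≤ lamm := hlamm.1.elim fun i hi => hi ▸ hL.posSemidef.eigenvalues_nonneg i
  have hlamP0 : 0 ≤ lamP := hlamP.1.elim fun i hi => hi ▸ hP.eigenvalues_nonneg i
  have hK : 0 ≤ a ^ 2 * c ^ 2 * m * lamm * lamP / (2 * β') := by positivity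
  let V' (t : ℝ) : ℝ := 2 * (Function.uncurry (fun i => x i t) ⬝ᵥ (L ⊗ₖ P) *ᵥ
    Function.uncurry (coupledField L Γ c f (fun i => e i t) (fun i => x i t)))
  have hderiv (t : ℝ) (ht : 0 ≤ t) : HasDerivWithinAt (lyapV L P x) (V' t) (Set.Ici 0) t :=
    hasDerivWithinAt_lyapV hL.isSymm (isHermitian_iff_isSymm.1 hP.isHermitian) fun i => hode i t ht
  have hdissipation (t : ℝ) (ht : 0 ≤ t) : V' t ≤ -2 * (β - β') * lyapV L P x t +
      a ^ 2 * c ^ 2 * m * lamm * lamP / (2 * β') * Real.exp (-2 * b * t) := by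
    have henergy := hL.two_mul_dotProduct_coupledField_le hP hPΓ hf
      (smul_le_smul_sq_of_spectral_gap hL.posSemidef hc hcα hlam2) hlamP0
      (le_smul_one_of_eigenvalues_le _ fun i => hlamm.2 ⟨i, rfl⟩)
      (le_smul_one_of_eigenvalues_le _ fun i => hlamP.2 ⟨i, rfl⟩) hβ'
      (fun i => e i t) (fun i => x i t)
    have hcoef : 0 ≤ c ^ 2 * (lamm * lamP) / (2 * β') := by positivity
    have herror := mul_le_mul_of_nonneg_left
      (uncurry_dotProduct_self_le_of_euclNorm_le_exp fun i => htrig i t ht) hcoef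
    exact (henergy.trans (add_le_add_right herror _)).trans_eq (by rw [lyapV]; ring!)
  refine ⟨fun t ht d hd => ?_, fun γ hγ => ?_⟩
  · rw [(uniqueDiffOn_Ici 0 t ht).eq_deriv _ hd (hderiv t ht)]
    exact hdissipation t ht
  · rw [mul_min_of_nonneg _ _ zero_le_two, lt_min_iff] at hγ
    exact exists_le_mul_exp_of_deriv_le hK hγ.1.le hγ.2 hderiv fun t ht => by
      simpa only [neg_mul] using hdissipation t ht

/-- Continuous-monitoring convergence (Theorem 1, updating rule (2)):
if `‖eᵢ(t)‖ ≤ a·e^{−bt}` for all `i, t`, then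
`V'(t) ≤ −2(β − β')V(t) + (a²c²m·λ_m(L)·λ_max(P)/(2β'))·e^{−2bt}`, and for every
`0 < γ < 2·min(b, β − β')` there is `C ≥ 0` with `V(t) ≤ C·e^{−γt}`. -/
theorem event_trigger_rule2_sync
    {m n : ℕ} [NeZero m] [NeZero n]
    (G : SimpleGraph (Fin m)) [DecidableRel G.Adj] (hG : G.Connected)
    (P Γ : Matrix (Fin n) (Fin n) ℝ)
    (hP : P.PosDef) (hPΓ : (P * Γ).PosSemidef)
    (lam2 lamm lamP : ℝ)
    (hlam2 : IsLeast {r : ℝ | r ≠ 0 ∧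
      ∃ i, (SimpleGraph.posSemidef_lapMatrix ℝ G).isHermitian.eigenvalues i = r} lam2)
    (hlamm : IsGreatest {r : ℝ |
      ∃ i, (SimpleGraph.posSemidef_lapMatrix ℝ G).isHermitian.eigenvalues i = r} lamm)
    (hlamP : IsGreatest {r : ℝ | ∃ i, hP.isHermitian.eigenvalues i = r} lamP)
    (α β c : ℝ) (hβ : 0 < β) (hc : 0 < c) (hcα : α < c * lam2)
    (f : (Fin n → ℝ) → (Fin n → ℝ)) (hf : MemQuad P Γ α β f)
    (β' : ℝ) (hβ'0 : 0 < β') (hβ'β : β' < β)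
    (x e : Fin m → ℝ → Fin n → ℝ)
    (hode : ∀ (i : Fin m) (t : ℝ), 0 ≤ t →
      HasDerivWithinAt (x i)
        (f (x i t) - c • (∑ j, G.lapMatrix ℝ i j • (Γ *ᵥ x j t)) + c • e i t)
        (Set.Ici 0) t)
    (a b : ℝ) (ha : 0 < a) (hb : 0 < b)
    (htrig : ∀ (i : Fin m) (t : ℝ), 0 ≤ t → euclNorm (e i t) ≤ a * Real.exp (-b * t)) :
    (∀ t : ℝ, 0 ≤ t → ∀ d : ℝ,
        HasDerivWithinAt (lyapV (G.lapMatrix ℝ) P x) d (Set.Ici 0) t →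
        d ≤ -2 * (β - β') * lyapV (G.lapMatrix ℝ) P x t
            + a ^ 2 * c ^ 2 * m * lamm * lamP / (2 * β') * Real.exp (-2 * b * t)) ∧
      ∀ γ : ℝ, 0 < γ → γ < 2 * min b (β - β') →
        ∃ C : ℝ, 0 ≤ C ∧ ∀ t : ℝ, 0 ≤ t →
          lyapV (G.lapMatrix ℝ) P x t ≤ C * Real.exp (-γ * t) := by
  have h := event_trigger_rule2_sync_general (isWeightedLaplacian_lapMatrix G) hP.posSemidef hPΓ
    (fun i hi => hlam2.2 ⟨hi, i, rfl⟩) hlamm hlamP hc.le hcα.le hf hβ'0 hode htrig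
  exact ⟨h.1, fun γ _ => h.2 γ⟩
end
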